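/- Let β = 1 and α > 0 (with α ∈ [0,1]). Let x : ℤ → Bool be an island of pluses, i.e. {i | x i = true} is finite and nonempty, and let m = max {i | x i = true}. Then the iterates F^t δ_x converge on thin cylinders, as t → ∞, to the Dirac measure at the (⊕⊖, m+1)-jump configuration, i.e. the configuration z with z i = true for all i ≤ m and z i = false for all i > m. -/

import Mathlib

/-!
With `β = 1` pluses never die, and a minus at `i` can turn plus (with probability `α`) only when its
right neighbour `i + 1` is plus. So almost surely the site `m` stays plus and everything to the
right of `m` stays minus, and it remains to see that each site `i < m` fills up.

Let `p_t(i)` be the probability that site `i` is minus at time `t`. Bounding the one-step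
probability of staying minus pointwise gives `p_{t+1}(i) ≤ (1 - α) p_t(i) + p_t(i + 1)`. If
`p_t(i + 1) → 0`, taking `limsup` yields `L ≤ (1 - α) L` with `L ≤ 1`, hence `L = 0`; a
downward induction starting from `p_t(m) = 0` gives `p_t(i) → 0` for all `i ≤ m`. Convergence of all
one-site marginals to those of a Dirac measure then gives convergence on thin cylinders, by a finite
union bound.
-/


open MeasureTheory Filter

namespace PCA

/-- Configuration space: `true` is ⊕ (plus), `false` is ⊖ (minus). -/
abbrev Config : Type := ℤ → Bool

/-- Transition probabilities of the PCA. -/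
def theta (α β : ℝ) : Bool → Bool → ℝ
  | false, false => 0
  | true,  false => β
  | false, true  => α
  | true,  true  => 1

/-- Thin cylinder determined by a finite set of coordinates and prescribed values. -/
def cyl (S : Finset ℤ) (a : ℤ → Bool) : Set Config := {y | ∀ i ∈ S, y i = a i}

/-- `K` is the update kernel of the PCA: from configuration `x`, all sites update
independently, site `i` becoming plus with probability `theta α β (x i) (x (i+1))`.
This pins down `K x` as the corresponding product of Bernoulli measures, via its
values on thin cylinders. -/
def IsPCAKernel (α β : ℝ) (K : Config → Measure Config) : Prop :=
  (∀ x, IsProbabilityMeasure (K x)) ∧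
  ∀ (x : Config) (S : Finset ℤ) (a : ℤ → Bool),
    K x (cyl S a) =
      ∏ i ∈ S, ENNReal.ofReal
        (if a i then theta α β (x i) (x (i + 1)) else 1 - theta α β (x i) (x (i + 1)))

/-- `F` is the PCA operator with parameters `α, β`: `F μ` is `μ` bound with the
product-Bernoulli update kernel. -/
def IsPCA (α β : ℝ) (F : Measure Config → Measure Config) : Prop :=
  ∃ K : Config → Measure Config, IsPCAKernel α β K ∧
    ∀ (μ : Measure Config) (A : Set Config), MeasurableSet A →
      F μ A = ∫⁻ x, K x A ∂μ

/-- The configuration "all minuses". -/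
def allMinus : Config := fun _ => false

/-- The configuration "all pluses". -/
def allPlus : Config := fun _ => true

/-- Convergence of a sequence of measures to `ν` on all thin cylinders. -/
def TendstoCyl (seq : ℕ → Measure Config) (ν : Measure Config) : Prop :=
  ∀ (S : Finset ℤ) (a : ℤ → Bool),
    Tendsto (fun t => seq t (cyl S a)) atTop (nhds (ν (cyl S a)))

end PCA

namespace PCA

lemma measurableSet_cyl (S : Finset ℤ) (a : ℤ → Bool) : MeasurableSet (cyl S a) := by
  have : cyl S a = ⋂ i ∈ S, (fun y : Config => y i) ⁻¹' {a i} := by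
    ext y; simp [cyl]
  rw [this]
  exact Finset.measurableSet_biInter _ fun i _ => measurable_pi_apply i (measurableSet_singleton _)

/-- The event that site `i` is in state `b`. -/
def site (i : ℤ) (b : Bool) : Set Config := {y | y i = b}

lemma measurableSet_site (i : ℤ) (b : Bool) : MeasurableSet (site i b) :=
  (measurable_pi_apply i : Measurable fun y : Config => y i) (measurableSet_singleton b)

lemma site_eq_cyl (i : ℤ) (b : Bool) : site i b = cyl {i} fun _ => b := by
  ext y; simp [site, cyl]

section Step

variable {α : ℝ} {F : Measure Config → Measure Config}

lemma IsPCA.apply_site {β : ℝ} (hF : IsPCA α β F) (μ : Measure Config) (i : ℤ) (b : Bool) :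
    F μ (site i b) = ∫⁻ y, ENNReal.ofReal
      (if b then theta α β (y i) (y (i + 1)) else 1 - theta α β (y i) (y (i + 1))) ∂μ := by
  obtain ⟨K, hK, hFK⟩ := hF
  rw [hFK μ _ (measurableSet_site i b)]
  refine lintegral_congr fun y => ?_
  rw [site_eq_cyl, hK.2]
  simp

lemma IsPCA.isProbabilityMeasure {β : ℝ} (hF : IsPCA α β F) (μ : Measure Config)
    [IsProbabilityMeasure μ] : IsProbabilityMeasure (F μ) := by
  obtain ⟨K, hK, hFK⟩ := hF
  refine ⟨?_⟩
  rw [hFK μ _ MeasurableSet.univ]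
  have h : ∀ y, K y Set.univ = 1 := fun y => (hK.1 y).measure_univ
  simp [h]

lemma lintegral_le_add_site (μ : Measure Config) (f : Config → ENNReal) (c d : ENNReal) (i j : ℤ)
    (b : Bool)
    (h : ∀ y, f y ≤ c * (site i b).indicator 1 y + d * (site j b).indicator 1 y) :
    ∫⁻ y, f y ∂μ ≤ c * μ (site i b) + d * μ (site j b) := by
  have hi := measurableSet_site i b
  have hj := measurableSet_site j b
  refine (lintegral_mono h).trans_eq ?_
  rw [lintegral_add_left ((measurable_one.indicator hi).const_mul c),
    lintegral_const_mul c (measurable_one.indicator hi),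
    lintegral_const_mul d (measurable_one.indicator hj),
    lintegral_indicator_one hi, lintegral_indicator_one hj]

/-- A site can be plus only if it or its right neighbour was plus. -/
lemma IsPCA.apply_site_true_le (hα1 : α ≤ 1) (hF : IsPCA α 1 F) (μ : Measure Config) (i : ℤ) :
    F μ (site i true) ≤ μ (site i true) + μ (site (i + 1) true) := by
  rw [hF.apply_site, ← one_mul (μ (site i true)), ← one_mul (μ (site (i + 1) true))]
  refine lintegral_le_add_site μ _ 1 1 i (i + 1) true fun y => ?_
  cases h1 : y i <;> cases h2 : y (i + 1) <;>
    simp [site, Set.indicator, theta, h1, h2, hα1]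

/-- Pluses survive: a site can be minus only if it was minus. -/
lemma IsPCA.apply_site_false_le (hα0 : 0 ≤ α) (hF : IsPCA α 1 F) (μ : Measure Config) (i : ℤ) :
    F μ (site i false) ≤ μ (site i false) := by
  have := lintegral_le_add_site μ (fun y => ENNReal.ofReal
    (if false then theta α 1 (y i) (y (i + 1)) else 1 - theta α 1 (y i) (y (i + 1))))
    1 0 i i false fun y => ?_
  · rw [hF.apply_site]; simpa using this
  cases h1 : y i <;> cases y (i + 1) <;>
    simp [site, Set.indicator, theta, h1, hα0]

/-- A minus with a plus on its right survives with probability `1 - α`; the last term bounds the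
case of a minus on its right. -/
lemma IsPCA.apply_site_false_le_add (hF : IsPCA α 1 F) (μ : Measure Config)
    (i : ℤ) :
    F μ (site i false) ≤
      ENNReal.ofReal (1 - α) * μ (site i false) + μ (site (i + 1) false) := by
  rw [hF.apply_site, ← one_mul (μ (site (i + 1) false))]
  refine lintegral_le_add_site μ _ _ 1 i (i + 1) false fun y => ?_
  cases h1 : y i <;> cases h2 : y (i + 1) <;>
    simp [site, Set.indicator, theta, h1, h2]

end Step

/-- A perturbed contraction `u_{t+1} ≤ c u_t + v_t` with `c < 1` and `v → 0` tends to `0`. -/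
lemma tendsto_zero_of_le_mul_add {u v : ℕ → ENNReal} {c : ENNReal} (hc : c < 1)
    (hu : ∀ t, u t ≤ 1) (hv : Tendsto v atTop (nhds 0)) (h : ∀ t, u (t + 1) ≤ c * u t + v t) :
    Tendsto u atTop (nhds 0) := by
  have hL1 : limsup u atTop ≤ 1 := limsup_le_of_le (by isBoundedDefault) (.of_forall hu)
  have hL : limsup u atTop ≤ c * limsup u atTop := by
    calc limsup u atTop = limsup (fun t => u (t + 1)) atTop := (limsup_nat_add u 1).symm
      _ ≤ limsup ((fun t => c * u t) + v) atTop := limsup_le_limsup (.of_forall h)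
      _ = limsup (fun t => c * u t) atTop := ENNReal.limsup_add_of_right_tendsto_zero hv _
      _ = c * limsup u atTop := ENNReal.limsup_const_mul_of_ne_top (hc.trans_le le_top).ne
  have h0 : limsup u atTop = 0 := by
    by_contra hne
    have hlt := ENNReal.mul_lt_mul_left hne (hL1.trans_lt ENNReal.one_lt_top).ne hc
    rw [one_mul] at hlt
    exact absurd hL (not_le.2 hlt)
  exact tendsto_of_le_liminf_of_limsup_le bot_le h0.le

/-- Convergence to a Dirac measure on thin cylinders can be checked one site at a time. -/
lemma tendstoCyl_dirac {μ : ℕ → Measure Config} (hμ : ∀ t, IsProbabilityMeasure (μ t)) (z : Config)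
    (h : ∀ i, Tendsto (fun t => μ t (site i !(z i))) atTop (nhds 0)) :
    TendstoCyl μ (Measure.dirac z) := by
  intro S a
  rw [Measure.dirac_apply' _ (measurableSet_cyl S a)]
  by_cases hz : z ∈ cyl S a
  · have hle : ∀ t, μ t (cyl S a)ᶜ ≤ ∑ i ∈ S, μ t (site i !(z i)) := fun t => by
      refine (measure_mono fun y hy => ?_).trans (measure_biUnion_finset_le S _)
      simp only [cyl, Set.mem_compl_iff, Set.mem_ofPred_eq, not_forall] at hy
      obtain ⟨i, hi, hne⟩ := hy
      rw [← hz i hi] at hne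
      simp only [Set.mem_iUnion]
      exact ⟨i, hi, Bool.eq_not_iff.2 hne⟩
    have hc : Tendsto (fun t => μ t (cyl S a)ᶜ) atTop (nhds 0) := by
      refine tendsto_of_tendsto_of_tendsto_of_le_of_le tendsto_const_nhds ?_
        (fun _ => zero_le) hle
      simpa using tendsto_finsetSum S fun i _ => h i
    have heq : ∀ t, μ t (cyl S a) = 1 - μ t (cyl S a)ᶜ := fun t => by
      have := hμ t
      rw [← prob_compl_eq_one_sub (measurableSet_cyl S a).compl, compl_compl]
    simp only [heq, Set.indicator_of_mem hz, Pi.one_apply]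
    simpa using ENNReal.Tendsto.sub (tendsto_const_nhds (x := (1 : ENNReal))) hc
      (Or.inl ENNReal.one_ne_top)
  · rw [Set.indicator_of_notMem hz]
    simp only [cyl, Set.mem_ofPred_eq, not_forall] at hz
    obtain ⟨i, hi, hne⟩ := hz
    refine tendsto_of_tendsto_of_tendsto_of_le_of_le tendsto_const_nhds (h i)
      (fun _ => zero_le) fun t => measure_mono fun y hy => ?_
    have hyi := hy i hi
    simp only [site, Set.mem_ofPred_eq, hyi]
    cases h1 : z i <;> cases h2 : a i <;> simp_all

end PCA

/-- if `β = 1`, `α > 0` and `x` is a nonempty island of pluses with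
rightmost plus at `m`, then `F^t δ_x` converges on thin cylinders to the Dirac
measure at the `(⊕⊖, m+1)`-jump configuration `i ↦ (i ≤ m)`. -/
theorem pca_island_of_pluses_to_jump (α : ℝ)
    (hα0 : 0 < α) (hα1 : α ≤ 1)
    (F : Measure PCA.Config → Measure PCA.Config) (hF : PCA.IsPCA α 1 F)
    (x : PCA.Config) (hx : {i : ℤ | x i = true}.Finite)
    (m : ℤ) (hm : IsGreatest {i : ℤ | x i = true} m) :
    PCA.TendstoCyl (fun t => F^[t] (Measure.dirac x))
      (Measure.dirac (fun i => decide (i ≤ m))) := by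
  set μ : ℕ → Measure PCA.Config := fun t => F^[t] (Measure.dirac x) with hμdef
  have hsucc : ∀ t, μ (t + 1) = F (μ t) := fun t => Function.iterate_succ_apply' F t _
  have hμ : ∀ t, IsProbabilityMeasure (μ t) := fun t => by
    induction t with
    | zero => exact inferInstanceAs (IsProbabilityMeasure (Measure.dirac x))
    | succ t ih => rw [hsucc]; exact hF.isProbabilityMeasure _
  have hzero : ∀ i b, x i ≠ b → μ 0 (PCA.site i b) = 0 := fun i b hb => by
    change Measure.dirac x (PCA.site i b) = 0
    rw [Measure.dirac_apply' _ (PCA.measurableSet_site i b)]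
    exact Set.indicator_of_notMem (s := PCA.site i b) (f := (1 : PCA.Config → ENNReal)) hb
  have hright : ∀ t i, m < i → μ t (PCA.site i true) = 0 := fun t => by
    induction t with
    | zero => exact fun i hi => hzero i true fun h => absurd (hm.2 h) (not_le.2 hi)
    | succ t ih =>
      intro i hi
      have := hF.apply_site_true_le hα1 (μ t) i
      rw [ih i hi, ih (i + 1) (by omega), add_zero] at this
      rw [hsucc]
      exact le_antisymm this zero_le
  have hmid : ∀ t, μ t (PCA.site m false) = 0 := fun t => by
    induction t with
    | zero => exact hzero m false (by simpa using hm.1)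
    | succ t ih =>
      rw [hsucc]
      exact le_antisymm ((hF.apply_site_false_le hα0.le (μ t) m).trans_eq ih) zero_le
  have hleft : ∀ i, i ≤ m → Tendsto (fun t => μ t (PCA.site i false)) atTop (nhds 0) := by
    intro i hi
    induction i, hi using Int.leInductionDown with
    | base => simp [hmid]
    | pred i _ ih =>
      refine PCA.tendsto_zero_of_le_mul_add (c := ENNReal.ofReal (1 - α)) ?_
        (fun t => prob_le_one) ih fun t => ?_
      · rw [ENNReal.ofReal_lt_one]; linarith
      · have := hF.apply_site_false_le_add (μ t) (i - 1)
        rwa [sub_add_cancel, ← hsucc] at this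
  refine PCA.tendstoCyl_dirac hμ _ fun i => ?_
  by_cases hi : i ≤ m
  · simpa [hi] using hleft i hi
  · simp [hi, hright _ i (not_le.1 hi)]
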